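/- Let N ≥ D, let X ∈ ℝ^{N×D} have full column rank D, and let A be an invertible D×D matrix. Suppose β : [0,∞) → ℝ^D is a differentiable natural gradient flow trajectory for (X, y), i.e. F_X(β_t) β̇_t = −∇L_X(β_t), β' : [0,∞) → ℝ^D is a differentiable natural gradient flow trajectory for (XAᵀ, y), i.e. F_{XAᵀ}(β'_t) β̇'_t = −∇L_{XAᵀ}(β'_t), and Aᵀ β'_0 = β_0. Then the logit trajectories coincide: X Aᵀ β'_t = X β_t for all t ≥ 0. -/

import Mathlib

/-!
The Fisher matrix of logistic regression with labels `±1` is the Hessian of the loss, so along a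
natural gradient flow the gradient itself obeys a linear equation,
`d/dt ∇L(β_t) = F(β_t) β̇_t = -∇L(β_t)`, and hence `∇L(β_t) = e^{-t} ∇L(β_0)`
(`gradL_flow_eq_exp`). The gradient transforms as `∇L_{XAᵀ}(b) = A ∇L_X(Aᵀ b)`
(`gradL_mul_transpose`), so cancelling `A` gives `∇L_X(Aᵀ β'_t) = ∇L_X(β_t)` for all `t ≥ 0`.
Finally `⟨∇L(b) - ∇L(c), b - c⟩ = ∑ₙ (φ(zₙ) - φ(wₙ)) (zₙ - wₙ)` with `z = X b`, `w = X c`, and `φ` is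
strictly increasing, so equal gradients force equal logits (`mulVec_eq_of_gradL_eq`).
-/

open Matrix Set

/-- The logistic sigmoid `φ(u) = 1/(1+exp(-u))`. -/
noncomputable def phi (u : ℝ) : ℝ := 1 / (1 + Real.exp (-u))

/-- Gradient of the logistic loss `L_X(β) = Σ_n log(1+exp(-y_n x_nᵀβ))` of a linear
classifier `β`, namely `∇L_X(β) = -Σ_n y_n (1-φ(y_n x_nᵀβ)) x_n`. -/
noncomputable def gradL {N D : ℕ} (X : Matrix (Fin N) (Fin D) ℝ) (y : Fin N → ℝ)
    (β : Fin D → ℝ) : Fin D → ℝ :=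
  fun d => -∑ n, y n * (1 - phi (y n * ∑ i, X n i * β i)) * X n d

/-- Training-sample Fisher information matrix
`F_X(β) = Xᵀ diag(φ(x_nᵀβ)(1-φ(x_nᵀβ))) X`. -/
noncomputable def fisher {N D : ℕ} (X : Matrix (Fin N) (Fin D) ℝ) (β : Fin D → ℝ) :
    Matrix (Fin D) (Fin D) ℝ :=
  Xᵀ * Matrix.diagonal (fun n => phi ((X *ᵥ β) n) * (1 - phi ((X *ᵥ β) n))) * X

lemma phi_strictMono : StrictMono phi := by
  intro a b hab
  unfold phi
  have := Real.exp_pos (-b)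
  have : Real.exp (-b) < Real.exp (-a) := Real.exp_lt_exp.mpr (by linarith)
  exact one_div_lt_one_div_of_lt (by linarith) (by linarith)

lemma hasDerivAt_phi (u : ℝ) : HasDerivAt phi (phi u * (1 - phi u)) u := by
  have hpos : 1 + Real.exp (-u) ≠ 0 := by positivity
  have h := (((hasDerivAt_neg u).exp).const_add 1).inv hpos
  have hphi : phi = (fun x : ℝ => 1 + Real.exp (-x))⁻¹ := by
    funext x
    simp [phi]
  rw [← hphi] at h
  refine h.congr_deriv ?_
  simp only [phi]
  field_simp
  ring

/-- For `y = ±1` the residual is affine in `φ(z)`, with coefficient independent of the label. -/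
lemma label_mul_one_sub_phi {y : ℝ} (hy : y = 1 ∨ y = -1) (z : ℝ) :
    y * (1 - phi (y * z)) = (1 + y) / 2 - phi z := by
  rcases hy with rfl | rfl
  · norm_num
  · have h1 : 1 + Real.exp z ≠ 0 := by positivity
    simp only [phi, neg_mul, one_mul, neg_neg, Real.exp_neg]
    have := Real.exp_pos z
    field_simp
    ring

lemma gradL_eq_transpose_mulVec {N D : ℕ} (X : Matrix (Fin N) (Fin D) ℝ) {y : Fin N → ℝ}
    (hy : ∀ n, y n = 1 ∨ y n = -1) (b : Fin D → ℝ) :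
    gradL X y b = Xᵀ *ᵥ fun n => phi ((X *ᵥ b) n) - (1 + y n) / 2 := by
  funext d
  simp only [gradL, mulVec, dotProduct, transpose_apply, ← Finset.sum_neg_distrib]
  refine Finset.sum_congr rfl fun n _ => ?_
  rw [label_mul_one_sub_phi (hy n)]
  ring

lemma gradL_mul_transpose {N D : ℕ} (X : Matrix (Fin N) (Fin D) ℝ)
    (A : Matrix (Fin D) (Fin D) ℝ) {y : Fin N → ℝ}
    (hy : ∀ n, y n = 1 ∨ y n = -1) (b : Fin D → ℝ) :
    gradL (X * Aᵀ) y b = A *ᵥ gradL X y (Aᵀ *ᵥ b) := by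
  simp only [gradL_eq_transpose_mulVec _ hy, mulVec_mulVec, transpose_mul, transpose_transpose]

/-- The Fisher matrix is the Hessian of the loss, in the form of a chain rule along a curve. -/
lemma hasDerivWithinAt_gradL {N D : ℕ} (X : Matrix (Fin N) (Fin D) ℝ) {y : Fin N → ℝ}
    (hy : ∀ n, y n = 1 ∨ y n = -1) {b : ℝ → Fin D → ℝ} {db : Fin D → ℝ} {s : Set ℝ} {t : ℝ}
    (hb : HasDerivWithinAt b db s t) :
    HasDerivWithinAt (fun r => gradL X y (b r)) (fisher X (b t) *ᵥ db) s t := by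
  simp only [gradL_eq_transpose_mulVec X hy]
  have hlogit : ∀ n, HasDerivWithinAt (fun r => (X *ᵥ b r) n) ((X *ᵥ db) n) s t := by
    intro n
    simp only [mulVec, dotProduct]
    exact HasDerivWithinAt.fun_sum fun i _ => ((hasDerivWithinAt_pi.1 hb) i).const_mul (X n i)
  rw [hasDerivWithinAt_pi]
  intro d
  have h : HasDerivWithinAt
      (fun r => ∑ n, Xᵀ d n * (phi ((X *ᵥ b r) n) - (1 + y n) / 2))
      (∑ n, Xᵀ d n * (phi ((X *ᵥ b t) n) * (1 - phi ((X *ᵥ b t) n)) * (X *ᵥ db) n)) s t :=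
    HasDerivWithinAt.fun_sum fun n _ =>
      (((hasDerivAt_phi _).comp_hasDerivWithinAt t (hlogit n)).sub_const _).const_mul _
  refine h.congr_deriv ?_
  rw [fisher, ← mulVec_mulVec, ← mulVec_mulVec]
  refine Finset.sum_congr rfl fun n _ => ?_
  rw [mulVec_diagonal]

lemma gradL_flow_eq_exp {N D : ℕ} (X : Matrix (Fin N) (Fin D) ℝ) {y : Fin N → ℝ}
    (hy : ∀ n, y n = 1 ∨ y n = -1) {b db : ℝ → Fin D → ℝ}
    (hb : ∀ t ∈ Ici (0:ℝ), HasDerivWithinAt b (db t) (Ici 0) t)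
    (hflow : ∀ t ∈ Ici (0:ℝ), fisher X (b t) *ᵥ db t = -gradL X y (b t))
    {t : ℝ} (ht : t ∈ Ici (0:ℝ)) :
    gradL X y (b t) = Real.exp (-t) • gradL X y (b 0) := by
  -- The integrating factor: `e^r ∇L(b_r)` has zero derivative on `[0, ∞)`.
  have hderiv : ∀ r ∈ Ici (0:ℝ),
      HasDerivWithinAt (fun r => Real.exp r • gradL X y (b r)) 0 (Ici 0) r := by
    intro r hr
    have h := (Real.hasDerivAt_exp r).hasDerivWithinAt.fun_smul
      (hasDerivWithinAt_gradL X hy (hb r hr))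
    rw [hflow r hr] at h
    exact h.congr_deriv (by simp)
  have hle := (convex_Ici (0:ℝ)).norm_image_sub_le_of_norm_hasDerivWithin_le (C := 0) hderiv
    (by simp) self_mem_Ici ht
  have hconst : Real.exp t • gradL X y (b t) = gradL X y (b 0) := by
    have := norm_le_zero_iff.1 (hle.trans_eq (zero_mul _))
    simpa using sub_eq_zero.1 this
  rw [← hconst, smul_smul, ← Real.exp_add]
  simp

lemma mulVec_eq_of_gradL_eq {N D : ℕ} (X : Matrix (Fin N) (Fin D) ℝ) {y : Fin N → ℝ}
    (hy : ∀ n, y n = 1 ∨ y n = -1) {b c : Fin D → ℝ} (h : gradL X y b = gradL X y c) :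
    X *ᵥ b = X *ᵥ c := by
  rw [gradL_eq_transpose_mulVec X hy, gradL_eq_transpose_mulVec X hy, ← sub_eq_zero,
    ← mulVec_sub] at h
  have hsum : ∑ n, (phi ((X *ᵥ b) n) - phi ((X *ᵥ c) n)) * ((X *ᵥ b) n - (X *ᵥ c) n) = 0 := by
    have h' := congrArg (fun v => v ⬝ᵥ (b - c)) h
    simp only [mulVec_sub, mulVec_transpose, zero_dotProduct] at h'
    rw [← sub_vecMul, ← dotProduct_mulVec, mulVec_sub] at h'
    simpa [dotProduct] using h'
  have hnonneg : ∀ n ∈ Finset.univ,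
      0 ≤ (phi ((X *ᵥ b) n) - phi ((X *ᵥ c) n)) * ((X *ᵥ b) n - (X *ᵥ c) n) := by
    intro n _
    rcases le_total ((X *ᵥ b) n) ((X *ᵥ c) n) with hle | hle
    · exact mul_nonneg_of_nonpos_of_nonpos
        (sub_nonpos.2 (phi_strictMono.monotone hle)) (sub_nonpos.2 hle)
    · exact mul_nonneg (sub_nonneg.2 (phi_strictMono.monotone hle)) (sub_nonneg.2 hle)
  funext n
  rcases mul_eq_zero.1 ((Finset.sum_eq_zero_iff_of_nonneg hnonneg).1 hsum n (Finset.mem_univ n))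
    with hn | hn
  · exact phi_strictMono.injective (sub_eq_zero.1 hn)
  · exact sub_eq_zero.1 hn

/-- **Conclusion** (logit invariance in the overdetermined case): with `N ≥ D`, `X` of
full column rank and `A` invertible, the logit trajectories of NGF on `(X, y)` and on
`(XAᵀ, y)` coincide. -/
theorem ngf_logit_invariance_overdetermined {N D : ℕ} (hND : D ≤ N)
    (X : Matrix (Fin N) (Fin D) ℝ) (hX : X.rank = D)
    (A : Matrix (Fin D) (Fin D) ℝ) (hA : IsUnit A)
    (y : Fin N → ℝ) (hy : ∀ n, y n = 1 ∨ y n = -1)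
    (β β' dβ dβ' : ℝ → Fin D → ℝ)
    (hβdiff : ∀ t ∈ Ici (0:ℝ), HasDerivWithinAt β (dβ t) (Ici 0) t)
    (hβ'diff : ∀ t ∈ Ici (0:ℝ), HasDerivWithinAt β' (dβ' t) (Ici 0) t)
    (hflow : ∀ t ∈ Ici (0:ℝ), fisher X (β t) *ᵥ dβ t = -gradL X y (β t))
    (hflow' : ∀ t ∈ Ici (0:ℝ),
      fisher (X * Aᵀ) (β' t) *ᵥ dβ' t = -gradL (X * Aᵀ) y (β' t))
    (hinit : Aᵀ *ᵥ β' 0 = β 0) :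
    ∀ t ∈ Ici (0:ℝ), (X * Aᵀ) *ᵥ β' t = X *ᵥ β t := by
  intro t ht
  have h := gradL_flow_eq_exp X hy hβdiff hflow ht
  have h' := gradL_flow_eq_exp (X * Aᵀ) hy hβ'diff hflow' ht
  rw [gradL_mul_transpose X A hy, gradL_mul_transpose X A hy, hinit, ← mulVec_smul, ← h] at h'
  rw [← mulVec_mulVec]
  exact mulVec_eq_of_gradL_eq X hy (mulVec_injective_of_isUnit hA h')
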